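/- arXiv:0708.3718 — 2 statements merged into one kernel-verified Lean document; each statement's English description precedes it below -/
import Mathlib

section
/- Let A and B be unital C*-algebras and θ : A → B a surjective bounded (complex-)linear map such that θ(a)θ(b) = 0 whenever a, b are self-adjoint elements of A with ab = 0. Then θ(1) is a central element of B and θ(1) is invertible in B. -/
/-!
For a self-adjoint `a`, compose `θ` with the continuous functional calculus of `a` to get a bounded
linear map `Φ : C(X, ℝ) → B`, `X` the spectrum of `a`, with `Φ f * Φ g = 0` whenever `f * g = 0`.
The heart of the proof is that such a `Φ` is balanced (`balanced`):
`Φ (t * f) * Φ g = Φ f * Φ (t * g)`.  With `t` the coordinate function this yields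
`θ a * θ 1 = θ 1 * θ a` and `θ a * θ a = θ (a * a) * θ 1`.

The first identity extends to all of `A` by linearity, and surjectivity makes `θ 1` central. The
second polarizes to `θ x * θ x = θ (x * x) * θ 1` for every `x`; taking `θ x = 1` gives an inverse
of the central element `θ 1`.

To see that `Φ` is balanced, note that the identity is immediate when `t` is replaced by a function
`w` with `w * (1 - w) * f = 0`, since then `w * f` is orthogonal to `(1 - w) * g` and `(1 - w) * f`
to `w * g`. By linearity it holds for sums of such `w`. For `y : C(X, ℝ)` with `0 ≤ y`, a continuous
staircase of unit steps in `y` stays within distance `1` of `y`, and it is such a sum as soon as `f`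
vanishes where the staircase climbs. A two-piece partition of unity, periodic in `y`, writes any `f`
as `f₁ + f₂` with each piece vanishing on the climbing intervals of a suitable staircase. Hence the
defect `Φ (y * f) * Φ g - Φ f * Φ (y * g)` is bounded independently of `y`; it is linear in `y`
and zero for constant `y`, so replacing `y` by `N * (t + ‖t‖)` with `N → ∞` shows that it vanishes.
-/

/-- Continuous step: `0` up to `1/3`, `1` from `2/3` on, linear in between. -/
noncomputable def ramp (x : ℝ) : ℝ := max 0 (min 1 (3 * x - 1))

/-- The 1-periodic function, with values in `[0, 1]`, that vanishes on the climbing intervals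
`[k + 1/3, k + 2/3]` of the integer translates of `ramp`. Together with its translate by `1/2` it
forms a partition of unity. -/
noncomputable def bump (x : ℝ) : ℝ := max 0 (min 1 (1 / 2 + Real.cos (2 * Real.pi * x)))

lemma continuous_ramp : Continuous ramp := by unfold ramp; fun_prop

lemma continuous_bump : Continuous bump := by unfold bump; fun_prop

lemma ramp_nonneg (x : ℝ) : 0 ≤ ramp x := le_max_left _ _

lemma ramp_le_one (x : ℝ) : ramp x ≤ 1 := max_le zero_le_one (min_le_left _ _)

lemma ramp_eq_zero {x : ℝ} (hx : x ≤ 1 / 3) : ramp x = 0 :=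
  max_eq_left ((min_le_right _ _).trans (by linarith))

lemma ramp_eq_one {x : ℝ} (hx : 2 / 3 ≤ x) : ramp x = 1 := by
  unfold ramp
  rw [min_eq_left (by linarith), max_eq_right zero_le_one]

lemma abs_bump_le (x : ℝ) : |bump x| ≤ 1 :=
  abs_le.2 ⟨(neg_nonpos.2 zero_le_one).trans (le_max_left _ _),
    max_le zero_le_one (min_le_left _ _)⟩

lemma bump_add_half (x : ℝ) : bump x + bump (x + 1 / 2) = 1 := by
  unfold bump
  rw [show 2 * Real.pi * (x + 1 / 2) = 2 * Real.pi * x + Real.pi by ring, Real.cos_add_pi]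
  grind

lemma bump_sub_nat (x : ℝ) (k : ℕ) : bump (x - k) = bump x := by
  unfold bump
  rw [show 2 * Real.pi * (x - k) = 2 * Real.pi * x - k * (2 * Real.pi) by ring,
    Real.cos_sub_nat_mul_two_pi]

lemma bump_eq_zero {x : ℝ} (h1 : 1 / 3 ≤ x) (h2 : x ≤ 2 / 3) : bump x = 0 := by
  have hpi := Real.pi_pos
  have h : (1 : ℝ) / 2 ≤ Real.cos (2 * Real.pi * x - Real.pi) := by
    rw [← Real.cos_pi_div_three, ← Real.cos_abs (2 * Real.pi * x - Real.pi)]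
    apply Real.cos_le_cos_of_nonneg_of_le_pi (abs_nonneg _) (by linarith)
    rw [abs_le]
    constructor <;> nlinarith
  rw [Real.cos_sub_pi] at h
  exact max_eq_left ((min_le_right _ _).trans (by linarith))

lemma ramp_mul_bump (x : ℝ) (k : ℕ) : ramp (x - k) * (1 - ramp (x - k)) * bump x = 0 := by
  rw [← bump_sub_nat x k]
  rcases le_total (x - k) (1 / 3) with h | h
  · simp [ramp_eq_zero h]
  rcases le_total (x - k) (2 / 3) with h' | h'
  · simp [bump_eq_zero h h']
  · simp [ramp_eq_one h']

lemma abs_sub_staircase_le (n : ℕ) {y : ℝ} (h0 : 0 ≤ y) (hn : y ≤ n) :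
    |y - ∑ k ∈ Finset.range n, ramp (y - k)| ≤ 1 := by
  induction n with
  | zero =>
    have : y = 0 := le_antisymm (by simpa using hn) h0
    simp [this]
  | succ n ih =>
    rw [Finset.sum_range_succ]
    rcases le_total y n with h | h
    · rw [ramp_eq_zero (x := y - n) (by linarith), add_zero]
      exact ih h
    · have : ∑ k ∈ Finset.range n, ramp (y - k) = n := by
        rw [Finset.sum_congr rfl (g := fun _ => (1 : ℝ))]
        · simp
        · intro k hk
          have : (k : ℝ) + 1 ≤ n := by exact_mod_cast Finset.mem_range.1 hk
          exact ramp_eq_one (by linarith)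
      rw [this, abs_le]
      push_cast at hn
      constructor <;> linarith [ramp_nonneg (y - n), ramp_le_one (y - n)]

section Balanced

variable {X B : Type*} [TopologicalSpace X] [NormedRing B] [NormedAlgebra ℝ B]

/-- `bump` composed with a continuous function. -/
noncomputable def bumpMap (y : C(X, ℝ)) : C(X, ℝ) := ⟨fun x => bump (y x), by
  have := continuous_bump; fun_prop⟩

/-- The `k`-th step of the staircase in `y`. -/
noncomputable def rampMap (y : C(X, ℝ)) (k : ℕ) : C(X, ℝ) := ⟨fun x => ramp (y x - k), by
  have := continuous_ramp; fun_prop⟩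

lemma balanced_of_mul_one_sub (Φ : C(X, ℝ) →L[ℝ] B)
    (hΦ : ∀ f g, f * g = 0 → Φ f * Φ g = 0) {w f : C(X, ℝ)} (h : w * (1 - w) * f = 0)
    (g : C(X, ℝ)) : Φ (w * f) * Φ g = Φ f * Φ (w * g) := by
  have h1 := hΦ (w * f) ((1 - w) * g) (by linear_combination g * h)
  have h2 := hΦ ((1 - w) * f) (w * g) (by linear_combination g * h)
  rw [sub_mul, one_mul, map_sub, mul_sub] at h1
  rw [sub_mul, one_mul, map_sub, sub_mul] at h2
  rw [sub_eq_zero.1 h1, sub_eq_zero.1 h2]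

variable [CompactSpace X]

lemma norm_bumpMap_le (y : C(X, ℝ)) : ‖bumpMap y‖ ≤ 1 :=
  (ContinuousMap.norm_le _ zero_le_one).2 fun x => abs_bump_le (y x)

/-- On functions supported where the staircase in `y` is locally constant, the balancing defect of
`y` is bounded independently of `y`. -/
lemma norm_defect_bumpMap_le (Φ : C(X, ℝ) →L[ℝ] B)
    (hΦ : ∀ f g, f * g = 0 → Φ f * Φ g = 0) (y f g : C(X, ℝ)) (hy : ∀ x, 0 ≤ y x) :
    ‖Φ (y * (bumpMap y * f)) * Φ g - Φ (bumpMap y * f) * Φ (y * g)‖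
      ≤ 2 * (‖Φ‖ * ‖f‖ * (‖Φ‖ * ‖g‖)) := by
  obtain ⟨n, hn⟩ := exists_nat_ge ‖y‖
  set S : C(X, ℝ) := ∑ k ∈ Finset.range n, rampMap y k with hS
  set F := bumpMap y * f with hF
  have hFn : ‖F‖ ≤ ‖f‖ := (norm_mul_le _ _).trans
    (mul_le_of_le_one_left (norm_nonneg _) (norm_bumpMap_le y))
  have hSy : ‖y - S‖ ≤ 1 := by
    refine (ContinuousMap.norm_le _ zero_le_one).2 fun x => ?_
    have := abs_sub_staircase_le n (hy x)
      (((le_abs_self _).trans (ContinuousMap.norm_coe_le_norm y x)).trans hn)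
    simpa [hS, ContinuousMap.sum_apply, rampMap] using this
  have hbal : Φ (S * F) * Φ g = Φ F * Φ (S * g) := by
    simp only [hS, Finset.sum_mul, map_sum, Finset.mul_sum]
    refine Finset.sum_congr rfl fun k _ => balanced_of_mul_one_sub Φ hΦ ?_ g
    ext x
    have := ramp_mul_bump (y x) k
    simp only [hF, rampMap, bumpMap, ContinuousMap.mul_apply, ContinuousMap.sub_apply,
      ContinuousMap.one_apply, ContinuousMap.coe_mk, ContinuousMap.zero_apply]
    linear_combination f x * this
  have key : Φ (y * F) * Φ g - Φ F * Φ (y * g)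
      = Φ ((y - S) * F) * Φ g - Φ F * Φ ((y - S) * g) := by
    simp only [sub_mul, map_sub, mul_sub, hbal]
    abel
  have hΦn : ∀ u v : C(X, ℝ), ‖u‖ ≤ ‖f‖ → ‖v‖ ≤ ‖g‖ →
      ‖Φ u * Φ v‖ ≤ ‖Φ‖ * ‖f‖ * (‖Φ‖ * ‖g‖) := fun u v hu hv =>
    (norm_mul_le _ _).trans (mul_le_mul (Φ.le_opNorm_of_le hu) (Φ.le_opNorm_of_le hv)
      (norm_nonneg _) (by positivity))
  have hm : ∀ u : C(X, ℝ), ‖(y - S) * u‖ ≤ ‖u‖ := fun u => (norm_mul_le _ _).trans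
    (mul_le_of_le_one_left (norm_nonneg _) hSy)
  rw [key, two_mul]
  exact (norm_sub_le _ _).trans
    (add_le_add (hΦn _ _ ((hm F).trans hFn) le_rfl) (hΦn _ _ hFn (hm g)))

/-- A bounded linear map on `C(X, ℝ)` preserving zero products is balanced. -/
lemma balanced (Φ : C(X, ℝ) →L[ℝ] B) (hΦ : ∀ f g, f * g = 0 → Φ f * Φ g = 0)
    (t f g : C(X, ℝ)) : Φ (t * f) * Φ g = Φ f * Φ (t * g) := by
  set K := ‖Φ‖ * ‖f‖ * (‖Φ‖ * ‖g‖)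
  have affine : ∀ (r c : ℝ) (u : C(X, ℝ)),
      Φ ((r • t + c • 1) * u) * Φ g - Φ u * Φ ((r • t + c • 1) * g)
        = r • (Φ (t * u) * Φ g - Φ u * Φ (t * g)) := by
    intro r c u
    simp only [add_mul, smul_mul_assoc, one_mul, map_add, map_smul, mul_add, mul_smul_comm,
      smul_sub]
    abel
  have hpos : ∀ x, 0 ≤ t x + ‖t‖ := fun x => by
    linarith [neg_abs_le (t x), ContinuousMap.norm_coe_le_norm t x, Real.norm_eq_abs (t x)]
  have bound : ∀ N : ℕ, N * ‖Φ (t * f) * Φ g - Φ f * Φ (t * g)‖ ≤ 4 * K := by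
    intro N
    set y : C(X, ℝ) := (N : ℝ) • t + (N * ‖t‖) • 1 with hy
    set y' : C(X, ℝ) := (N : ℝ) • t + (N * ‖t‖ + 1 / 2) • 1 with hy'
    have hyx : ∀ x, y x = N * (t x + ‖t‖) := fun x => by simp [hy]; ring
    have hyx' : ∀ x, y' x = N * (t x + ‖t‖) + 1 / 2 := fun x => by simp [hy']; ring
    have h0 : ∀ x, 0 ≤ (N : ℝ) * (t x + ‖t‖) := fun x => mul_nonneg N.cast_nonneg (hpos x)
    have b1 := norm_defect_bumpMap_le Φ hΦ y f g fun x => by rw [hyx]; exact h0 x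
    have b2 := norm_defect_bumpMap_le Φ hΦ y' f g fun x => by rw [hyx']; linarith [h0 x]
    have hsum : bumpMap y * f + bumpMap y' * f = f := by
      ext x
      have := bump_add_half (N * (t x + ‖t‖))
      simp only [bumpMap, ContinuousMap.add_apply, ContinuousMap.mul_apply, ContinuousMap.coe_mk,
        hyx, hyx']
      linear_combination f x * this
    rw [hy, affine, ← hy] at b1
    rw [hy', affine, ← hy'] at b2
    have split : (N : ℝ) • (Φ (t * f) * Φ g - Φ f * Φ (t * g))
        = (N : ℝ) • (Φ (t * (bumpMap y * f)) * Φ g - Φ (bumpMap y * f) * Φ (t * g))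
        + (N : ℝ) • (Φ (t * (bumpMap y' * f)) * Φ g - Φ (bumpMap y' * f) * Φ (t * g)) := by
      rw [← smul_add]
      congr 1
      conv_lhs => rw [← hsum]
      simp only [mul_add, add_mul, map_add]
      abel
    calc N * ‖Φ (t * f) * Φ g - Φ f * Φ (t * g)‖
        = ‖(N : ℝ) • (Φ (t * f) * Φ g - Φ f * Φ (t * g))‖ := by simp [norm_smul]
      _ ≤ 2 * K + 2 * K := by rw [split]; exact (norm_add_le _ _).trans (add_le_add b1 b2)
      _ = 4 * K := by ring
  by_contra hne
  have hd : 0 < ‖Φ (t * f) * Φ g - Φ f * Φ (t * g)‖ := norm_pos_iff.2 (sub_ne_zero.2 hne)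
  obtain ⟨N, hN⟩ := exists_nat_gt (4 * K / ‖Φ (t * f) * Φ g - Φ f * Φ (t * g)‖)
  exact absurd (bound N) (not_le.2 ((div_lt_iff₀ hd).1 hN))

end Balanced

lemma selfAdjoint_identities {A B : Type*} [CStarAlgebra A] [CStarAlgebra B] (θ : A →L[ℂ] B)
    (hθ : ∀ a b : A, IsSelfAdjoint a → IsSelfAdjoint b → a * b = 0 → θ a * θ b = 0)
    {a : A} (ha : IsSelfAdjoint a) :
    θ a * θ 1 = θ 1 * θ a ∧ θ (a * a) * θ 1 = θ a * θ a := by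
  let ψ := cfcHom (R := ℝ) ha
  let Φ : C(spectrum ℝ a, ℝ) →L[ℝ] B :=
    (θ.restrictScalars ℝ).comp ⟨ψ.toAlgHom.toLinearMap, cfcHom_continuous ha⟩
  have hΦ : ∀ f, Φ f = θ (ψ f) := fun _ => rfl
  have hz : ∀ f g, f * g = 0 → Φ f * Φ g = 0 := fun f g h =>
    hθ _ _ (cfcHom_predicate ha f) (cfcHom_predicate ha g) <| by
      change ψ f * ψ g = 0
      rw [← map_mul, h, map_zero]
  let t : C(spectrum ℝ a, ℝ) := (ContinuousMap.id ℝ).restrict (spectrum ℝ a)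
  have ht : ψ t = a := cfcHom_id ha
  constructor
  · simpa [hΦ, ht] using balanced Φ hz t 1 1
  · simpa [hΦ, ht] using balanced Φ hz t t 1

/-- Let `A`, `B` be unital C*-algebras and `θ : A → B` a surjective
bounded linear map sending zero products of self-adjoint elements to zero products.
Then `θ 1` is central in `B` and invertible in `B`. -/
theorem zpp_selfAdjoint_surjective_theta_one_central_invertible
    {A B : Type*} [CStarAlgebra A] [CStarAlgebra B]
    (θ : A →L[ℂ] B) (hsurj : Function.Surjective θ)
    (hθ : ∀ a b : A, IsSelfAdjoint a → IsSelfAdjoint b → a * b = 0 → θ a * θ b = 0) :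
    (∀ b : B, θ 1 * b = b * θ 1) ∧ IsUnit (θ 1) := by
  have hdec : ∀ x : A, ∃ p q : A, IsSelfAdjoint p ∧ IsSelfAdjoint q ∧ x = p + Complex.I • q :=
    fun x => ⟨_, _, (realPart x).2, (imaginaryPart x).2,
      (realPart_add_I_smul_imaginaryPart x).symm⟩
  have central : ∀ b : B, θ 1 * b = b * θ 1 := by
    intro b
    obtain ⟨x, rfl⟩ := hsurj b
    obtain ⟨p, q, hp, hq, rfl⟩ := hdec x
    simp only [map_add, map_smul, mul_add, add_mul, mul_smul_comm, smul_mul_assoc,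
      (selfAdjoint_identities θ hθ hp).1, (selfAdjoint_identities θ hθ hq).1]
  refine ⟨central, ?_⟩
  obtain ⟨x, hx⟩ := hsurj 1
  have hsq : θ (x * x) * θ 1 = θ x * θ x := by
    obtain ⟨p, q, hp, hq, rfl⟩ := hdec x
    have h1 := (selfAdjoint_identities θ hθ hp).2
    have h2 := (selfAdjoint_identities θ hθ hq).2
    have h3 := (selfAdjoint_identities θ hθ (hp.add hq)).2
    have h4 : θ (p * q) * θ 1 + θ (q * p) * θ 1 = θ p * θ q + θ q * θ p := by
      simp only [mul_add, add_mul, map_add, h1, h2] at h3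
      rw [← sub_eq_zero] at h3 ⊢
      rw [← h3]
      abel
    have h5 := congrArg (Complex.I • ·) h4
    simp only [smul_add] at h5
    simp only [mul_add, add_mul, map_add, map_smul, mul_smul_comm, smul_mul_assoc, smul_add, h1,
      h2]
    rw [← sub_eq_zero] at h5 ⊢
    rw [← h5]
    abel
  rw [hx, one_mul] at hsq
  exact ⟨⟨θ 1, θ (x * x), (central _).trans hsq, hsq⟩, rfl⟩
end

section
/- Let A and B be unital C*-algebras and θ : A → B a bijective bounded (complex-)linear map such that θ(a)θ(b) = 0 for all a, b in A with ab = 0. Then θ(1) is central and invertible in B, and the map φ : A → B defined by φ(a) = θ(1)⁻¹θ(a) is a bijective algebra homomorphism (i.e. φ is multiplicative: φ(ab) = φ(a)φ(b) for all a, b in A). -/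
/-!
The heart of the matter is a property of zero products in a C*-algebra: a bounded bilinear map
`ψ` on `A` with `ψ s t = 0` whenever `s * t = 0` satisfies `ψ b 1 = ψ 1 b` for every `b`
(`zpp_bilin_eq`). Applied to `ψ s t = θ (a * s) * θ (t * c)` it yields
`θ (a * b) * θ c = θ a * θ (b * c)`. Taking `a = c = 1` and using surjectivity, `θ 1` is central;
taking `c = 1`, `θ (a * b) * θ 1 = θ a * θ b`; and if `θ u = 1` then `θ (u * u) * θ 1 = 1`, so
`θ 1` is invertible. The remaining claims are then immediate.

For the bilinear property it suffices to treat `b ≥ 0`. Let `y ≥ 0` and let `e i` be the hat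
function centred at `i`, applied to `y` by functional calculus. Then `∑ e i = 1`, `∑ i • e i = y`,
and `e i * e j = 0` when `|i - j| ≥ 2`, so that
`ψ y 1 - ψ 1 y = ∑ i, (ψ (e (i + 1)) (e i) - ψ (e i) (e (i + 1)))`.
Put `p r = ∑ e i` over `i ≡ r` modulo `3`. Indices in the classes `r + 1` and `r` have
non-orthogonal hats only when they are consecutive, so this sum equals
`∑ r, (ψ (p (r + 1)) (p r) - ψ (p r) (p (r + 1)))`, a sum of six terms bounded independently of `y`
since `‖p r‖ ≤ 1`. Applying the bound to `y = n • b` for all `n` forces `ψ b 1 = ψ 1 b`.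
-/

/-- The hat function of half-width `1` centred at `i`. -/
noncomputable def hat (i : ℕ) (x : ℝ) : ℝ := max 0 (1 - |x - i|)

lemma hat_nonneg (i : ℕ) (x : ℝ) : 0 ≤ hat i x := le_max_left _ _

lemma continuous_hat (i : ℕ) : Continuous (hat i) := by
  unfold hat; fun_prop

lemma hat_eq_zero {i : ℕ} {x : ℝ} (h : 1 ≤ |x - i|) : hat i x = 0 :=
  max_eq_left (by linarith)

lemma hat_mul_hat {i j : ℕ} (h : i + 2 ≤ j) (x : ℝ) : hat i x * hat j x = 0 := by
  have h' : (i : ℝ) + 2 ≤ j := by exact_mod_cast h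
  rcases le_total x (i + 1) with hx | hx
  · rw [hat_eq_zero (i := j), mul_zero]
    exact le_abs.2 (Or.inr (by linarith))
  · rw [hat_eq_zero (i := i), zero_mul]
    exact le_abs.2 (Or.inl (by linarith))

/-- On `[0, N]`, weighted sums of the hats interpolate the weights linearly between integers. -/
lemma sum_hat (N : ℕ) (x : ℝ) (hx : 0 ≤ x) (hN : x ≤ N) (c : ℕ → ℝ) :
    ∑ i ∈ Finset.range (N + 2), c i * hat i x =
      c ⌊x⌋₊ * (1 - (x - ⌊x⌋₊)) + c (⌊x⌋₊ + 1) * (x - ⌊x⌋₊) := by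
  have h1 := Nat.floor_le hx
  have h2 := Nat.lt_floor_add_one x
  have h3 : ⌊x⌋₊ ≤ N := Nat.floor_le_of_le hN
  generalize ⌊x⌋₊ = m at *
  rw [Finset.sum_eq_add m (m + 1) (by omega)]
  · congr 2
    · rw [hat, abs_of_nonneg (by linarith), max_eq_right (by linarith)]
    · rw [hat, abs_of_nonpos (by push_cast; linarith),
        max_eq_right (by push_cast; linarith)]
      push_cast; ring
  · rintro i - ⟨hi, hi'⟩
    rw [hat_eq_zero, mul_zero]
    rcases lt_or_gt_of_ne hi with h | h
    · have : (i : ℝ) + 1 ≤ m := by exact_mod_cast h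
      exact le_abs.2 (Or.inl (by linarith))
    · have : (m : ℝ) + 2 ≤ i := by exact_mod_cast (by omega : m + 2 ≤ i)
      exact le_abs.2 (Or.inr (by linarith))
  · intro h; simp at h; omega
  · intro h; simp at h; omega

/-- The indicator of the residue class of `r` modulo `3`. -/
def resInd (r i : ℕ) : ℝ := if i % 3 = r then 1 else 0

lemma resInd_nonneg (r i : ℕ) : 0 ≤ resInd r i := by unfold resInd; split_ifs <;> simp

lemma resInd_le_one (r i : ℕ) : resInd r i ≤ 1 := by unfold resInd; split_ifs <;> simp

/-- Nearby indices have their difference determined by their residues modulo `3`. -/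
lemma sub_eq_resInd (i j : ℕ) (h1 : i < j + 2) (h2 : j < i + 2) :
    (i : ℝ) - j = (resInd 1 i * resInd 0 j - resInd 0 i * resInd 1 j) +
      (resInd 2 i * resInd 1 j - resInd 1 i * resInd 2 j) +
      (resInd 0 i * resInd 2 j - resInd 2 i * resInd 0 j) := by
  have h3 : i % 3 = 0 ∨ i % 3 = 1 ∨ i % 3 = 2 := by omega
  obtain rfl | rfl | rfl : j = i ∨ j = i + 1 ∨ i = j + 1 := by omega
  · ring
  · rcases h3 with h | h | h <;> simp [resInd, Nat.add_mod, h]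
  · have h3 : j % 3 = 0 ∨ j % 3 = 1 ∨ j % 3 = 2 := by omega
    rcases h3 with h | h | h <;> simp [resInd, Nat.add_mod, h]

section

variable {A B : Type*} [CStarAlgebra A] [CStarAlgebra B]

lemma cfc_sum_hat (y : A) (N : ℕ) (c : ℕ → ℝ) :
    ∑ i ∈ Finset.range N, (c i) • cfc (hat i) y =
      cfc (fun x => ∑ i ∈ Finset.range N, c i * hat i x) y := by
  have h := cfc_sum (fun i x => c i * hat i x) y (Finset.range N)
    (fun i _ => (continuous_const.mul (continuous_hat i)).continuousOn)
  have e : (∑ i ∈ Finset.range N, fun x => c i * hat i x) =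
      fun x => ∑ i ∈ Finset.range N, c i * hat i x := by
    ext x; simp
  rw [← e, h]
  refine Finset.sum_congr rfl fun i _ => ?_
  rw [← cfc_const_mul (c i) (hat i) y (continuous_hat i).continuousOn]

/-- The quantitative estimate: the bound does not depend on the size of `y`, so rescaling `y` makes
the left-hand side vanish. -/
lemma zpp_bilin_bound (ψ : A →ₗ[ℝ] A →ₗ[ℝ] B) (hψ : ∀ s t, s * t = 0 → ψ s t = 0)
    (C : ℝ) (hC : ∀ s t, ‖s‖ ≤ 1 → ‖t‖ ≤ 1 → ‖ψ s t‖ ≤ C)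
    (y : A) (hy : IsSelfAdjoint y) (hy0 : ∀ x ∈ spectrum ℝ y, 0 ≤ x) :
    ‖ψ y 1 - ψ 1 y‖ ≤ 6 * C := by
  obtain ⟨N, hN⟩ : ∃ N : ℕ, ∀ x ∈ spectrum ℝ y, x ≤ N := by
    obtain ⟨N, hN⟩ := exists_nat_ge (‖y‖ * ‖(1 : A)‖)
    exact ⟨N, fun x hx =>
      (le_abs_self x).trans ((spectrum.norm_le_norm_mul_of_mem hx).trans hN)⟩
  set e : ℕ → A := fun i => cfc (hat i) y with he
  have key : ∀ c : ℕ → ℝ, ∑ i ∈ Finset.range (N + 2), c i • e i =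
      cfc (fun x : ℝ => c ⌊x⌋₊ * (1 - (x - ⌊x⌋₊)) + c (⌊x⌋₊ + 1) * (x - ⌊x⌋₊)) y := by
    intro c
    rw [he, cfc_sum_hat y]
    exact cfc_congr fun x hx => sum_hat N x (hy0 x hx) (hN x hx) c
  have h_one : ∑ i ∈ Finset.range (N + 2), (1 : ℝ) • e i = 1 := by
    rw [key (fun _ => 1), ← cfc_const_one ℝ y]
    exact cfc_congr fun x _ => by ring
  have h_id : ∑ i ∈ Finset.range (N + 2), (i : ℝ) • e i = y := by
    rw [key (fun i => i)]
    conv_rhs => rw [← cfc_id' ℝ y]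
    exact cfc_congr fun x _ => by push_cast; ring
  set p : ℕ → A := fun r => ∑ i ∈ Finset.range (N + 2), resInd r i • e i with hp
  have hp1 : ∀ r, ‖p r‖ ≤ 1 := by
    intro r
    rw [hp]
    simp only [key]
    refine norm_cfc_le zero_le_one fun x hx => ?_
    have h1 := Nat.floor_le (hy0 x hx)
    have h2 := Nat.lt_floor_add_one x
    have a1 := resInd_nonneg r ⌊x⌋₊
    have a2 := resInd_le_one r ⌊x⌋₊
    have a3 := resInd_nonneg r (⌊x⌋₊ + 1)
    have a4 := resInd_le_one r (⌊x⌋₊ + 1)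
    rw [Real.norm_eq_abs, abs_le]
    constructor <;> nlinarith
  have horth : ∀ i j, i + 2 ≤ j → e i * e j = 0 ∧ e j * e i = 0 := by
    intro i j hij
    simp only [he]
    rw [← cfc_mul (hat i) (hat j) y (continuous_hat i).continuousOn (continuous_hat j).continuousOn,
      ← cfc_mul (hat j) (hat i) y (continuous_hat j).continuousOn (continuous_hat i).continuousOn]
    simp only [mul_comm (hat j _) (hat i _), hat_mul_hat hij]
    simp
  have expand : ∀ c d : ℕ → ℝ,
      ψ (∑ i ∈ Finset.range (N + 2), c i • e i) (∑ j ∈ Finset.range (N + 2), d j • e j) =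
      ∑ i ∈ Finset.range (N + 2), ∑ j ∈ Finset.range (N + 2), (c i * d j) • ψ (e i) (e j) := by
    intro c d
    rw [map_sum ψ, LinearMap.sum_apply]
    refine Finset.sum_congr rfl fun i _ => ?_
    rw [map_smul, LinearMap.smul_apply, map_sum, Finset.smul_sum]
    exact Finset.sum_congr rfl fun j _ => by rw [map_smul, smul_smul]
  have main : ψ y 1 - ψ 1 y = (ψ (p 1) (p 0) - ψ (p 0) (p 1)) +
      (ψ (p 2) (p 1) - ψ (p 1) (p 2)) + (ψ (p 0) (p 2) - ψ (p 2) (p 0)) := by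
    have h1 := expand (fun i => i) (fun _ => 1)
    have h2 := expand (fun _ => 1) (fun i => i)
    rw [h_id, h_one] at h1 h2
    rw [h1, h2]
    simp only [hp, expand, ← Finset.sum_sub_distrib, ← Finset.sum_add_distrib, ← sub_smul, ← add_smul]
    refine Finset.sum_congr rfl fun i _ => Finset.sum_congr rfl fun j _ => ?_
    by_cases h1 : i < j + 2
    · by_cases h2 : j < i + 2
      · rw [← sub_eq_resInd i j h1 h2, one_mul, mul_one]
      · rw [hψ _ _ (horth i j (by omega)).1, smul_zero, smul_zero]
    · rw [hψ _ _ (horth j i (by omega)).2, smul_zero, smul_zero]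
  have hb : ∀ r s, ‖ψ (p r) (p s)‖ ≤ C := fun r s => hC _ _ (hp1 r) (hp1 s)
  rw [main]
  refine (norm_add₃_le).trans ?_
  linarith [norm_sub_le (ψ (p 1) (p 0)) (ψ (p 0) (p 1)),
    norm_sub_le (ψ (p 2) (p 1)) (ψ (p 1) (p 2)), norm_sub_le (ψ (p 0) (p 2)) (ψ (p 2) (p 0)),
    hb 1 0, hb 0 1, hb 2 1, hb 1 2, hb 0 2, hb 2 0]

lemma zpp_bilin_eq_of_nonneg (ψ : A →ₗ[ℝ] A →ₗ[ℝ] B) (hψ : ∀ s t, s * t = 0 → ψ s t = 0)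
    (C : ℝ) (hC : ∀ s t, ‖s‖ ≤ 1 → ‖t‖ ≤ 1 → ‖ψ s t‖ ≤ C)
    (b : A) (hb : IsSelfAdjoint b) (hb0 : ∀ x ∈ spectrum ℝ b, 0 ≤ x) :
    ψ b 1 = ψ 1 b := by
  rw [← sub_eq_zero, ← norm_eq_zero]
  by_contra hne
  have hpos : 0 < ‖ψ b 1 - ψ 1 b‖ := lt_of_le_of_ne (norm_nonneg _) (Ne.symm hne)
  obtain ⟨n, hn⟩ := exists_nat_gt (6 * C / ‖ψ b 1 - ψ 1 b‖)
  rw [div_lt_iff₀ hpos] at hn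
  have hs : ∀ x ∈ spectrum ℝ ((n : ℝ) • b), 0 ≤ x := by
    intro x hx
    rw [← cfc_const_mul_id (n : ℝ) b, cfc_map_spectrum (fun x : ℝ => (n : ℝ) * x) b] at hx
    obtain ⟨z, hz, rfl⟩ := hx
    exact mul_nonneg n.cast_nonneg (hb0 z hz)
  have h := zpp_bilin_bound ψ hψ C hC ((n : ℝ) • b) (IsSelfAdjoint.smul (.all _) hb) hs
  rw [map_smul, map_smul, LinearMap.smul_apply, ← smul_sub, norm_smul, Real.norm_natCast] at h
  linarith

/-- A bounded bilinear map vanishing on zero products is balanced over the unit. -/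
lemma zpp_bilin_eq (ψ : A →ₗ[ℂ] A →ₗ[ℂ] B) (hψ : ∀ s t, s * t = 0 → ψ s t = 0)
    (C : ℝ) (hC : ∀ s t, ‖s‖ ≤ 1 → ‖t‖ ≤ 1 → ‖ψ s t‖ ≤ C) (b : A) :
    ψ b 1 = ψ 1 b := by
  let _ := CStarAlgebra.spectralOrder A
  have _ := CStarAlgebra.spectralOrderedRing A
  have hb : b ∈ Submodule.span ℂ {a : A | 0 ≤ a} := by
    rw [CStarAlgebra.span_nonneg]; trivial
  induction hb using Submodule.span_induction with
  | mem x hx =>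
    exact zpp_bilin_eq_of_nonneg
      (LinearMap.mk₂ ℝ (fun s t => ψ s t) (by simp) (by simp) (by simp) (by simp))
      hψ C hC x (IsSelfAdjoint.of_nonneg hx) fun z hz => spectrum_nonneg_of_nonneg hx hz
  | zero => simp
  | add x y _ _ hx hy => simp [hx, hy]
  | smul c x _ hx => simp [hx]

lemma zpp_balanced (θ : A →L[ℂ] B) (hθ : ∀ a b : A, a * b = 0 → θ a * θ b = 0) (a b c : A) :
    θ (a * b) * θ c = θ a * θ (b * c) := by
  have h := zpp_bilin_eq (LinearMap.mk₂ ℂ (fun s t => θ (a * s) * θ (t * c))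
      (by simp [mul_add, add_mul]) (by simp) (by simp [mul_add, add_mul]) (by simp))
    (fun s t hst => hθ _ _ (by rw [mul_assoc, ← mul_assoc s, hst, zero_mul, mul_zero]))
    ((‖θ‖ * ‖a‖) * (‖θ‖ * ‖c‖)) (fun s t hs ht => by
      have h1 : ‖a * s‖ ≤ ‖a‖ :=
        (norm_mul_le _ _).trans (mul_le_of_le_one_right (norm_nonneg _) hs)
      have h2 : ‖t * c‖ ≤ ‖c‖ :=
        (norm_mul_le _ _).trans (mul_le_of_le_one_left (norm_nonneg _) ht)
      exact (norm_mul_le _ _).trans (mul_le_mul (θ.le_opNorm_of_le h1) (θ.le_opNorm_of_le h2)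
        (norm_nonneg _) (by positivity))) b
  simpa using h

end


/-- Let `A`, `B` be unital C*-algebras and `θ : A → B` a bijective
bounded linear map preserving zero products (`a * b = 0` implies `θ a * θ b = 0`).
Then `θ 1` is central and invertible in `B`, and `φ := θ(1)⁻¹ θ` is a bijective
algebra homomorphism (multiplicative map). -/
theorem zpp_bijective_unital_algebra_isomorphism
    {A B : Type*} [CStarAlgebra A] [CStarAlgebra B]
    (θ : A →L[ℂ] B) (hbij : Function.Bijective θ)
    (hθ : ∀ a b : A, a * b = 0 → θ a * θ b = 0) :
    (∀ b : B, θ 1 * b = b * θ 1) ∧ IsUnit (θ 1) ∧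
      (Function.Bijective fun a : A => Ring.inverse (θ 1) * θ a) ∧
      ∀ a b : A, Ring.inverse (θ 1) * θ (a * b) =
        (Ring.inverse (θ 1) * θ a) * (Ring.inverse (θ 1) * θ b) := by
  have hmul : ∀ a b : A, θ (a * b) * θ 1 = θ a * θ b := fun a b => by
    simpa using zpp_balanced θ hθ a b 1
  have hcen : ∀ b : B, θ 1 * b = b * θ 1 := by
    intro b
    obtain ⟨a, rfl⟩ := hbij.2 b
    simpa using (zpp_balanced θ hθ 1 a 1).symm
  have hunit : IsUnit (θ 1) := by
    obtain ⟨u, hu⟩ := hbij.2 1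
    have h : θ (u * u) * θ 1 = 1 := by rw [hmul, hu, one_mul]
    exact ⟨⟨θ 1, θ (u * u), by rw [hcen, h], h⟩, rfl⟩
  have hl : Ring.inverse (θ 1) * θ 1 = 1 := Ring.inverse_mul_cancel _ hunit
  have hr : θ 1 * Ring.inverse (θ 1) = 1 := Ring.mul_inverse_cancel _ hunit
  refine ⟨hcen, hunit, ⟨fun a b hab => hbij.1 ?_, fun b => ?_⟩, fun a b => ?_⟩
  · simpa [← mul_assoc, hr] using congrArg (θ 1 * ·) hab
  · obtain ⟨a, ha⟩ := hbij.2 (θ 1 * b)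
    exact ⟨a, by simp only [ha, ← mul_assoc, hl, one_mul]⟩
  · apply hunit.mul_left_cancel
    apply hunit.mul_left_cancel
    calc θ 1 * (θ 1 * (Ring.inverse (θ 1) * θ (a * b)))
        = θ 1 * θ (a * b) := by rw [← mul_assoc (θ 1) (Ring.inverse _), hr, one_mul]
      _ = θ a * θ b := by rw [hcen, hmul]
      _ = (θ 1 * Ring.inverse (θ 1) * θ a) * (θ 1 * Ring.inverse (θ 1) * θ b) := by simp [hr]
      _ = θ 1 * (Ring.inverse (θ 1) * θ a * θ 1) * (Ring.inverse (θ 1) * θ b) := by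
        simp only [mul_assoc]
      _ = θ 1 * (θ 1 * (Ring.inverse (θ 1) * θ a * (Ring.inverse (θ 1) * θ b))) := by
        rw [← hcen]; simp only [mul_assoc]
end
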